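/- Let q be a complex number with 0 < |q| < 1, fix a square root q^{1/2} of q, and let a be a complex number with |a| < 1. Then ∫₀^π h(cos θ; 1, -1, q^{1/2}, -q^{1/2}) / h(cos θ; a) dθ = 2π / (q; q)_∞. -/

import Mathlib

open Complex MeasureTheory

/-- The q-shifted factorial `(x; q)_∞ = ∏_{k=0}^∞ (1 - x q^k)`. -/
noncomputable def qp (q x : ℂ) : ℂ := ∏' k : ℕ, (1 - x * q ^ k)

/-- The finite q-shifted factorial `(x; q)_n = ∏_{k=0}^{n-1} (1 - x q^k)`. -/
noncomputable def qpn (q x : ℂ) (n : ℕ) : ℂ := ∏ k ∈ Finset.range n, (1 - x * q ^ k)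

/-- For `x = cos θ`, `h(x; λ) = (λ e^{iθ}; q)_∞ (λ e^{-iθ}; q)_∞`. -/
noncomputable def hh (q : ℂ) (θ : ℝ) (l : ℂ) : ℂ :=
  qp q (l * Complex.exp ((θ : ℂ) * Complex.I)) *
    qp q (l * Complex.exp (-((θ : ℂ) * Complex.I)))


lemma qp_summ {q : ℂ} (hq : ‖q‖ < 1) (x : ℂ) : Summable (fun k : ℕ => ‖-(x * q ^ k)‖) := by
  simpa using (summable_geometric_of_lt_one (norm_nonneg _) hq).mul_left ‖x‖

lemma qp_mult {q : ℂ} (hq : ‖q‖ < 1) (x : ℂ) : Multipliable (fun k : ℕ => 1 - x * q ^ k) := by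
  simpa [sub_eq_add_neg] using multipliable_one_add_of_summable (qp_summ hq x)

lemma qp_rec {q : ℂ} (hq : ‖q‖ < 1) (x : ℂ) : qp q x = (1 - x) * qp q (x * q) := by
  unfold qp
  rw [tprod_eq_zero_mul' (by
    simpa [pow_succ', mul_assoc] using qp_mult hq (x * q))]
  simp [pow_succ', mul_assoc]

lemma qp_zero (q : ℂ) : qp q 0 = 1 := by simp [qp]

lemma qp_ne {q : ℂ} (hq : ‖q‖ < 1) {x : ℂ} (hx : ‖x‖ < 1) : qp q x ≠ 0 := by
  unfold qp
  simp only [sub_eq_add_neg]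
  refine tprod_one_add_ne_zero_of_summable (fun i h => ?_) (qp_summ hq x)
  have h1 : x * q ^ i = 1 := by linear_combination -h
  have h2 : ‖x * q ^ i‖ < 1 := by
    rw [norm_mul, norm_pow]
    calc ‖x‖ * ‖q‖ ^ i ≤ ‖x‖ * 1 := by gcongr; exact pow_le_one₀ (norm_nonneg _) hq.le
      _ < 1 := by simpa
  rw [h1] at h2
  simp at h2

lemma qp_diff {q : ℂ} (hq : ‖q‖ < 1) : Differentiable ℂ (qp q) := by
  have key : HasProdLocallyUniformlyOn (fun (k : ℕ) (x : ℂ) => 1 + -(x * q ^ k))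
      (fun x => ∏' k : ℕ, (1 + -(x * q ^ k))) Set.univ := by
    apply hasProdLocallyUniformlyOn_of_forall_compact isOpen_univ
    intro K _ hK
    obtain ⟨C, hC⟩ := hK.isBounded.exists_norm_le
    refine Summable.hasProdUniformlyOn_nat_one_add (u := fun k => C * ‖q‖ ^ k) hK
      ((summable_geometric_of_lt_one (norm_nonneg _) hq).mul_left C) ?_ ?_
    · refine Filter.Eventually.of_forall fun k x hx => ?_
      rw [norm_neg, norm_mul, norm_pow]
      gcongr
      exact hC x hx
    · intro k; fun_prop
  rw [← differentiableOn_univ]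
  have := (hasProdLocallyUniformlyOn_iff_tendstoLocallyUniformlyOn.mp key).differentiableOn
    (Filter.Eventually.of_forall fun s => by fun_prop) isOpen_univ
  refine this.congr fun x _ => ?_
  simp [qp, sub_eq_add_neg]

lemma qp_four {q u : ℂ} (hq : ‖q‖ < 1) (hu : u ^ 2 = q) (x : ℂ) :
    qp q (1 * x) * qp q (-1 * x) * qp q (u * x) * qp q (-u * x) = qp q (x ^ 2) := by
  have m := fun y => (qp_mult hq y).hasProd
  have H := (((m (1 * x)).mul (m (-1 * x))).mul (m (u * x))).mul (m (-u * x))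
  have hq2 : ‖q ^ 2‖ < 1 := by
    rw [norm_pow]; exact pow_lt_one₀ (norm_nonneg _) hq two_ne_zero
  have he : Multipliable (fun k : ℕ => 1 - x ^ 2 * q ^ (2 * k)) := by
    simpa only [pow_mul] using qp_mult hq2 (x ^ 2)
  have ho : Multipliable (fun k : ℕ => 1 - x ^ 2 * q ^ (2 * k + 1)) := by
    have := qp_mult hq2 (x ^ 2 * q)
    refine this.congr fun k => ?_
    ring
  have E := (m (x ^ 2)).unique
    (HasProd.even_mul_odd (f := fun k : ℕ => 1 - x ^ 2 * q ^ k) he.hasProd ho.hasProd)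
  have P := he.hasProd.mul ho.hasProd
  rw [← E] at P
  refine H.unique (P.congr_fun fun k => ?_)
  rw [← hu]
  ring

noncomputable def av (f : ℂ → ℂ) : ℂ :=
  ∫ θ in (0:ℝ)..(2 * Real.pi), f (Complex.exp ((θ : ℂ) * Complex.I))

lemma norm_e (θ : ℝ) : ‖Complex.exp ((θ : ℂ) * Complex.I)‖ = 1 := Complex.norm_exp_ofReal_mul_I θ

lemma av_congr {f g : ℂ → ℂ} (h : ∀ z, ‖z‖ = 1 → f z = g z) : av f = av g := by
  unfold av
  congr 1
  ext θ
  exact h _ (norm_e θ)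

lemma cont_e {f : ℂ → ℂ} (h : ContinuousOn f (Metric.sphere 0 1)) :
    Continuous (fun θ : ℝ => f (Complex.exp ((θ : ℂ) * Complex.I))) := by
  apply h.comp_continuous (by fun_prop)
  intro θ
  simp

lemma av_sub {f g : ℂ → ℂ} (hf : ContinuousOn f (Metric.sphere 0 1))
    (hg : ContinuousOn g (Metric.sphere 0 1)) : av (fun z => f z - g z) = av f - av g := by
  unfold av
  exact intervalIntegral.integral_sub ((cont_e hf).intervalIntegrable _ _)
    ((cont_e hg).intervalIntegrable _ _)

lemma av_const_mul (c : ℂ) (f : ℂ → ℂ) : av (fun z => c * f z) = c * av f := by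
  unfold av
  exact intervalIntegral.integral_const_mul _ _

lemma av_circle (f : ℂ → ℂ) {r : ℝ} (hr : r ≠ 0) :
    (∮ z in C(0, r), (z - 0)⁻¹ • f z) = Complex.I * av (fun z => f (r * z)) := by
  unfold av circleIntegral
  rw [← intervalIntegral.integral_const_mul]
  congr 1
  ext θ
  have h1 : (r : ℂ) ≠ 0 := by exact_mod_cast hr
  simp only [deriv_circleMap, circleMap, smul_eq_mul, zero_add, sub_zero]
  have h2 := Complex.exp_ne_zero ((θ : ℂ) * Complex.I)
  field_simp

lemma av_rot (f : ℂ → ℂ) (c : ℂ) : av (fun z => f (c * z)) = av (fun z => f (‖c‖ * z)) := by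
  unfold av
  have hp : Function.Periodic (fun θ : ℝ => f (‖c‖ * Complex.exp ((θ : ℂ) * Complex.I)))
      (2 * Real.pi) := by
    intro θ
    simp only
    congr 2
    push_cast
    rw [add_mul, Complex.exp_add, Complex.exp_two_pi_mul_I, mul_one]
  have h := hp.intervalIntegral_add_eq (Complex.arg c) 0
  rw [zero_add] at h
  rw [← h]
  have h2 := intervalIntegral.integral_comp_add_right (a := 0) (b := 2 * Real.pi)
    (fun θ : ℝ => f (‖c‖ * Complex.exp ((θ : ℂ) * Complex.I))) (Complex.arg c)
  rw [zero_add, add_comm (2 * Real.pi)] at h2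
  rw [← h2]
  congr 1
  ext θ
  refine congrArg f ?_
  push_cast
  rw [add_mul, Complex.exp_add]
  nth_rewrite 1 [← Complex.norm_mul_exp_arg_mul_I c]
  ring

lemma av_shift {f : ℂ → ℂ} {c d : ℂ} (hc : c ≠ 0) (hcd : ‖c‖ ≤ ‖d‖)
    (hf : ∀ z, ‖c‖ ≤ ‖z‖ → ‖z‖ ≤ ‖d‖ → DifferentiableAt ℂ f z) :
    av (fun z => f (c * z)) = av (fun z => f (d * z)) := by
  have h0 : 0 < ‖c‖ := norm_pos_iff.mpr hc
  have h := Complex.circleIntegral_sub_center_inv_smul_eq_of_differentiable_on_annulus_off_countable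
    (c := 0) h0 hcd (f := f) (s := ∅) Set.countable_empty
    (fun z hz => by
      simp only [Set.mem_sdiff, Metric.mem_closedBall, dist_zero_right, Metric.mem_ball,
        not_lt] at hz
      exact (hf z hz.2 hz.1).continuousAt.continuousWithinAt)
    (fun z hz => by
      simp only [Set.mem_sdiff, Metric.mem_closedBall, dist_zero_right, Metric.mem_ball,
        not_le] at hz
      exact hf z hz.1.2.le hz.1.1.le)
  rw [av_circle _ h0.ne', av_circle _ (h0.trans_le hcd).ne'] at h
  rw [av_rot f c, av_rot f d]
  exact (mul_left_cancel₀ Complex.I_ne_zero h).symm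

lemma av_lim {K : ℂ → ℂ → ℂ} {r : ℝ} {q b : ℂ} (hq : ‖q‖ < 1) (hb : ‖b‖ ≤ r)
    (hK : ContinuousOn (fun p : ℂ × ℂ => K p.1 p.2)
      (Metric.closedBall 0 r ×ˢ Metric.sphere 0 1)) :
    Filter.Tendsto (fun n : ℕ => av (K (b * q ^ n))) Filter.atTop (nhds (av (K 0))) := by
  have hmem : ∀ n : ℕ, b * q ^ n ∈ Metric.closedBall (0 : ℂ) r := by
    intro n
    rw [mem_closedBall_zero_iff, norm_mul, norm_pow]
    calc ‖b‖ * ‖q‖ ^ n ≤ ‖b‖ * 1 := by gcongr; exact pow_le_one₀ (norm_nonneg _) hq.le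
      _ ≤ r := by simpa
  have h0 : (0 : ℂ) ∈ Metric.closedBall (0 : ℂ) r := by
    simpa using (norm_nonneg b).trans hb
  have hsec : ∀ c ∈ Metric.closedBall (0 : ℂ) r, ContinuousOn (K c) (Metric.sphere 0 1) := by
    intro c hc
    exact hK.comp (f := fun z : ℂ => (c, z)) (by fun_prop) (fun z hz => ⟨hc, hz⟩)
  obtain ⟨C, hC⟩ := ((isCompact_closedBall (0 : ℂ) r).prod
    (isCompact_sphere (0 : ℂ) 1)).exists_bound_of_continuousOn hK
  have hlim : Filter.Tendsto (fun n : ℕ => b * q ^ n) Filter.atTop (nhds 0) := by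
    simpa using (tendsto_pow_atTop_nhds_zero_of_norm_lt_one hq).const_mul b
  unfold av
  refine intervalIntegral.tendsto_integral_filter_of_dominated_convergence (fun _ => C)
    (Filter.Eventually.of_forall fun n => (cont_e (hsec _ (hmem n))).aestronglyMeasurable)
    (Filter.Eventually.of_forall fun n => Filter.Eventually.of_forall fun θ _ => ?_)
    intervalIntegrable_const (Filter.Eventually.of_forall fun θ _ => ?_)
  · exact hC (_, _) ⟨hmem n, by simp⟩
  · have hw := hK (0, Complex.exp ((θ : ℂ) * Complex.I)) ⟨h0, by simp⟩
    refine Filter.Tendsto.comp (f := fun n : ℕ => (b * q ^ n, Complex.exp ((θ : ℂ) * Complex.I)))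
      hw ?_
    refine tendsto_nhdsWithin_iff.mpr ⟨hlim.prodMk_nhds tendsto_const_nhds,
      Filter.Eventually.of_forall fun n => ⟨hmem n, by simp⟩⟩

noncomputable def TT (q x : ℂ) : ℂ := qp q x * qp q (q * x⁻¹)

lemma TT_q {q : ℂ} (hq0 : q ≠ 0) (hq : ‖q‖ < 1) {x : ℂ} (hx : x ≠ 0) :
    TT q (q * x) = -x⁻¹ * TT q x := by
  unfold TT
  rw [show q * (q * x)⁻¹ = x⁻¹ by field_simp, qp_rec hq x⁻¹, qp_rec hq x, mul_comm x q,
    mul_comm x⁻¹ q]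
  field_simp
  ring

lemma TT_diff {q : ℂ} (hq : ‖q‖ < 1) {x : ℂ} (hx : x ≠ 0) : DifferentiableAt ℂ (TT q) x := by
  unfold TT
  have := qp_diff hq
  fun_prop (disch := assumption)

lemma ne_of_norm {z : ℂ} (hz : ‖z‖ = 1) : z ≠ 0 := by
  rintro rfl
  simp at hz

noncomputable def II (q b : ℂ) : ℂ := av (fun z => TT q z / qp q (b * z⁻¹))

lemma II_contOn {q : ℂ} (hq : ‖q‖ < 1) {r : ℝ} (hr : r < 1) :
    ContinuousOn (fun p : ℂ × ℂ => TT q p.2 / qp q (p.1 * p.2⁻¹))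
      (Metric.closedBall 0 r ×ˢ Metric.sphere 0 1) := by
  rintro ⟨b, z⟩ ⟨hb, hz⟩
  simp only [mem_closedBall_zero_iff, mem_sphere_zero_iff_norm] at hb hz
  have h0 := ne_of_norm hz
  apply ContinuousAt.continuousWithinAt
  have hc := (qp_diff hq).continuous
  have h1 : qp q (b * z⁻¹) ≠ 0 := qp_ne hq (by rw [norm_mul, norm_inv, hz]; linarith)
  refine ContinuousAt.div ?_ ?_ h1
  · exact ContinuousAt.comp (x := ((b, z) : ℂ × ℂ)) (g := TT q) (f := fun p : ℂ × ℂ => p.2)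
      (TT_diff hq h0).continuousAt continuousAt_snd
  · refine hc.continuousAt.comp (f := fun p : ℂ × ℂ => p.1 * p.2⁻¹) ?_
    exact continuousAt_fst.mul (continuousAt_snd.inv₀ h0)

lemma sec_cont {K : ℂ → ℂ → ℂ} {b : ℂ} {r : ℝ} (hb : ‖b‖ ≤ r)
    (hK : ContinuousOn (fun p : ℂ × ℂ => K p.1 p.2)
      (Metric.closedBall 0 r ×ˢ Metric.sphere 0 1)) : ContinuousOn (K b) (Metric.sphere 0 1) :=
  hK.comp (f := fun z : ℂ => (b, z)) (by fun_prop) (fun z hz => ⟨by simpa using hb, hz⟩)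

lemma JJ {q b : ℂ} (hq0 : q ≠ 0) (hq : ‖q‖ < 1) (hb : ‖b‖ < 1) :
    av (fun z => z⁻¹ * (TT q z / qp q (b * z⁻¹))) = - II q (b * q) := by
  have h := av_shift (f := fun z => TT q z / qp q (b * q * z⁻¹)) (c := q) (d := 1) hq0
    (by simpa using hq.le) (fun z hz _ => by
      have h0 : z ≠ 0 := by
        rintro rfl
        simp at hz
        exact hq0 hz
      have h1 : qp q (b * q * z⁻¹) ≠ 0 := by
        apply qp_ne hq
        rw [norm_mul, norm_mul, norm_inv, mul_assoc]
        have : ‖q‖ * ‖z‖⁻¹ ≤ 1 := by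
          rw [← div_eq_mul_inv]
          exact div_le_one_of_le₀ hz (norm_nonneg _)
        nlinarith [norm_nonneg b]
      have := qp_diff hq
      have := TT_diff hq h0
      fun_prop (disch := assumption))
  simp only [one_mul] at h
  change _ = II q (b * q) at h
  rw [← h, ← neg_one_mul, ← av_const_mul]
  refine av_congr fun z hz => ?_
  have h0 := ne_of_norm hz
  rw [TT_q hq0 hq h0, show b * q * (q * z)⁻¹ = b * z⁻¹ by field_simp]
  ring

lemma II_rec {q b : ℂ} (hq0 : q ≠ 0) (hq : ‖q‖ < 1) (hb : ‖b‖ < 1) :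
    II q b = (1 - b) * II q (b * q) := by
  have hc : ContinuousOn (fun z => TT q z / qp q (b * z⁻¹)) (Metric.sphere 0 1) :=
    sec_cont (K := fun b z => TT q z / qp q (b * z⁻¹)) le_rfl (II_contOn hq hb)
  have hinv : ContinuousOn (fun z : ℂ => z⁻¹) (Metric.sphere 0 1) := by
    refine continuousOn_inv₀.mono fun z hz => ?_
    exact ne_of_norm (by simpa using hz)
  have h1 : II q (b * q) = II q b - b * av (fun z => z⁻¹ * (TT q z / qp q (b * z⁻¹))) := by
    have hc2 : ContinuousOn (fun z => b * (z⁻¹ * (TT q z / qp q (b * z⁻¹))))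
        (Metric.sphere 0 1) := continuousOn_const.mul (hinv.mul hc)
    rw [← av_const_mul, II, II, ← av_sub hc hc2]
    refine av_congr fun z hz => ?_
    have h0 := ne_of_norm hz
    have hn : ‖b * z⁻¹‖ < 1 := by rw [norm_mul, norm_inv, hz]; simpa
    have h2 := qp_ne hq hn
    rw [show b * q * z⁻¹ = b * z⁻¹ * q by ring]
    have h3 := qp_rec hq (b * z⁻¹)
    have h4 : qp q (b * z⁻¹ * q) ≠ 0 := fun h => h2 (by rw [h3, h, mul_zero])
    have h5 : 1 - b * z⁻¹ ≠ 0 := fun h => h2 (by rw [h3, h, zero_mul])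
    rw [h3, ← mul_div_mul_left _ _ h5]
    ring
  rw [JJ hq0 hq hb] at h1
  linear_combination -h1

lemma II_q {q : ℂ} (hq : ‖q‖ < 1) : II q q = 2 * Real.pi := by
  have h1 : II q q = av (fun z => qp q ((1 : ℝ) * z)) := by
    refine av_congr fun z hz => ?_
    have hn : ‖q * z⁻¹‖ < 1 := by rw [norm_mul, norm_inv, hz]; simpa
    have h2 := qp_ne hq hn
    simp [TT, h2]
  have h2 := av_circle (qp q) (r := 1) one_ne_zero
  rw [Complex.circleIntegral_sub_center_inv_smul_of_differentiable_on_off_countable one_pos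
    Set.countable_empty (qp_diff hq).continuous.continuousOn
    (fun z _ => (qp_diff hq).differentiableAt), ← h1, qp_zero] at h2
  apply mul_left_cancel₀ Complex.I_ne_zero
  rw [← h2]
  simp
  ring

lemma II_zero {q : ℂ} (hq0 : q ≠ 0) (hq : ‖q‖ < 1) : qp q q * II q 0 = 2 * Real.pi := by
  have h1 : ∀ n : ℕ, (∏ k ∈ Finset.range n, (1 - q * q ^ k)) * II q (q * q ^ n)
      = 2 * Real.pi := by
    intro n
    induction n with
    | zero => simpa using II_q hq
    | succ n ih =>
      rw [← ih, Finset.prod_range_succ, II_rec hq0 hq (b := q * q ^ n) (by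
        rw [← pow_succ', norm_pow]
        exact pow_lt_one₀ (norm_nonneg _) hq (by simp)), pow_succ]
      ring_nf
  have h2 := (qp_mult hq q).hasProd.tendsto_prod_nat.mul
    (av_lim (K := fun b z => TT q z / qp q (b * z⁻¹)) hq le_rfl (II_contOn hq hq))
  exact tendsto_nhds_unique h2 (tendsto_const_nhds.congr fun n => (h1 n).symm)

noncomputable def FF (q a : ℂ) : ℂ :=
  av (fun z => qp q (z ^ 2) * qp q (z⁻¹ ^ 2) / (qp q (a * z) * qp q (a * z⁻¹)))

lemma FF_contOn {q : ℂ} (hq : ‖q‖ < 1) {r : ℝ} (hr : r < 1) :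
    ContinuousOn (fun p : ℂ × ℂ => qp q (p.2 ^ 2) * qp q (p.2⁻¹ ^ 2) /
        (qp q (p.1 * p.2) * qp q (p.1 * p.2⁻¹)))
      (Metric.closedBall 0 r ×ˢ Metric.sphere 0 1) := by
  rintro ⟨b, z⟩ ⟨hb, hz⟩
  simp only [mem_closedBall_zero_iff, mem_sphere_zero_iff_norm] at hb hz
  have h0 := ne_of_norm hz
  apply ContinuousAt.continuousWithinAt
  have hc := (qp_diff hq).continuous
  have h1 : qp q (b * z⁻¹) ≠ 0 := qp_ne hq (by rw [norm_mul, norm_inv, hz]; linarith)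
  have h2 : qp q (b * z) ≠ 0 := qp_ne hq (by rw [norm_mul, hz]; linarith)
  have hi : ContinuousAt (fun p : ℂ × ℂ => p.2⁻¹) (b, z) := continuousAt_snd.inv₀ h0
  have c1 := hc.continuousAt.comp (continuousAt_fst.mul hi)
  have c2 := hc.continuousAt.comp (hi.pow 2)
  refine ContinuousAt.div (ContinuousAt.mul ?_ c2) (ContinuousAt.mul ?_ c1) (mul_ne_zero h2 h1) <;>
  fun_prop

lemma FF_key {q u a : ℂ} (hq0 : q ≠ 0) (hq : ‖q‖ < 1) (hu : u ^ 2 = q) (ha : ‖a‖ < 1) :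
    av (fun z => (z + z⁻¹ - a) *
      (qp q (z ^ 2) * qp q (z⁻¹ ^ 2) / (qp q (a * z) * qp q (a * z⁻¹)))) = 0 := by
  have hu0 : u ≠ 0 := by
    rintro rfl
    apply hq0
    rw [← hu]; simp
  have hun : ‖u‖ < 1 := by
    rw [← hu, norm_pow] at hq
    exact (pow_lt_one_iff_of_nonneg (norm_nonneg _) two_ne_zero).mp hq
  have hup : 0 < ‖u‖ := norm_pos_iff.mpr hu0
  set f : ℂ → ℂ := fun z => z⁻¹ * TT q (z ^ 2) / (qp q (a * u * z) * qp q (a * u * z⁻¹)) with hf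
  have hd : ∀ z, ‖u‖ ≤ ‖z‖ → ‖z‖ ≤ ‖u⁻¹‖ → DifferentiableAt ℂ f z := by
    intro z hz1 hz2
    have h0 : z ≠ 0 := norm_pos_iff.mp (hup.trans_le hz1)
    have h1 : qp q (a * u * z⁻¹) ≠ 0 := by
      apply qp_ne hq
      rw [norm_mul, norm_mul, norm_inv, mul_assoc]
      have : ‖u‖ * ‖z‖⁻¹ ≤ 1 := by
        rw [← div_eq_mul_inv]
        exact div_le_one_of_le₀ hz1 (norm_nonneg _)
      nlinarith [norm_nonneg a]
    have h2 : qp q (a * u * z) ≠ 0 := by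
      apply qp_ne hq
      rw [norm_mul, norm_mul, mul_assoc]
      have : ‖u‖ * ‖z‖ ≤ 1 := by
        calc ‖u‖ * ‖z‖ ≤ ‖u‖ * ‖u⁻¹‖ := by gcongr
          _ = 1 := by rw [norm_inv, mul_inv_cancel₀ hup.ne']
      nlinarith [norm_nonneg a]
    have h3 : qp q (a * u * z) * qp q (a * u * z⁻¹) ≠ 0 := mul_ne_zero h2 h1
    have := qp_diff hq
    have h4 : DifferentiableAt ℂ (fun z => TT q (z ^ 2)) z :=
      DifferentiableAt.comp (g := TT q) (f := fun z : ℂ => z ^ 2) z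
        (TT_diff hq (pow_ne_zero 2 h0)) (differentiableAt_id.pow 2)
    simp only [hf]
    fun_prop (disch := assumption)
  have h := av_shift hu0 (hun.le.trans (by
    rw [norm_inv]; exact (one_le_inv₀ hup).mpr hun.le)) hd
  have hcf : ∀ c : ℂ, c = u ∨ c = u⁻¹ →
      ContinuousOn (fun z => f (c * z)) (Metric.sphere 0 1) := by
    intro c hc z hz
    have hz : ‖z‖ = 1 := by simpa using hz
    have hui : ‖u‖ ≤ ‖u⁻¹‖ := hun.le.trans (by
      rw [norm_inv]; exact (one_le_inv₀ hup).mpr hun.le)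
    have h5 : DifferentiableAt ℂ f (c * z) := by
      apply hd <;> rw [norm_mul, hz, mul_one] <;> rcases hc with rfl | rfl <;> first | exact hui | rfl
    exact (h5.continuousAt.comp (f := fun z => c * z) (by fun_prop)).continuousWithinAt
  have hs := av_sub (hcf u (Or.inl rfl)) (hcf u⁻¹ (Or.inr rfl))
  rw [h, sub_self] at hs
  have hs2 : u * av (fun z => f (u * z) - f (u⁻¹ * z)) = 0 := by rw [hs, mul_zero]
  rw [← av_const_mul] at hs2
  rw [← hs2]
  refine av_congr fun z hz => ?_
  have h0 := ne_of_norm hz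
  have hz2 : z ^ 2 ≠ 0 := pow_ne_zero 2 h0
  have t1 : TT q ((u * z) ^ 2) = -(z ^ 2)⁻¹ * TT q (z ^ 2) := by
    rw [mul_pow, hu, TT_q hq0 hq hz2]
  have t2 : TT q ((u⁻¹ * z) ^ 2) = -z ^ 2 * q⁻¹ * TT q (z ^ 2) := by
    have hx : (u⁻¹ * z) ^ 2 ≠ 0 := pow_ne_zero 2 (mul_ne_zero (inv_ne_zero hu0) h0)
    have := TT_q hq0 hq hx
    rw [show q * (u⁻¹ * z) ^ 2 = z ^ 2 by
      rw [← hu, ← mul_pow, mul_inv_cancel_left₀ hu0]] at this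
    rw [this, ← hu]
    field_simp
  have w : qp q (z ^ 2) * qp q (z⁻¹ ^ 2) = (1 - z⁻¹ ^ 2) * TT q (z ^ 2) := by
    rw [qp_rec hq (z⁻¹ ^ 2), TT, ← inv_pow, mul_comm q]
    ring
  have n1 : qp q (a * z) ≠ 0 := qp_ne hq (by rw [norm_mul, hz]; simpa)
  have n2 : qp q (a * z⁻¹) ≠ 0 := qp_ne hq (by rw [norm_mul, norm_inv, hz]; simpa)
  have r1 := qp_rec hq (a * z)
  have r2 := qp_rec hq (a * z⁻¹)
  have e1 : 1 - a * z ≠ 0 := fun h => n1 (by rw [r1, h, zero_mul])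
  have e2 : 1 - a * z⁻¹ ≠ 0 := fun h => n2 (by rw [r2, h, zero_mul])
  have m1 : qp q (a * z * q) ≠ 0 := fun h => n1 (by rw [r1, h, mul_zero])
  have m2 : qp q (a * z⁻¹ * q) ≠ 0 := fun h => n2 (by rw [r2, h, mul_zero])
  simp only [hf]
  rw [t1, t2, w, show a * u * (u * z) = a * z * q by rw [← hu]; ring,
    show a * u * (u * z)⁻¹ = a * z⁻¹ by field_simp,
    show a * u * (u⁻¹ * z) = a * z by field_simp,
    show a * u * (u⁻¹ * z)⁻¹ = a * z⁻¹ * q by rw [← hu]; field_simp, r1, r2]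
  generalize qp q (a * z * q) = A at *
  generalize qp q (a * z⁻¹ * q) = B at *
  generalize TT q (z ^ 2) = C at *
  rw [← hu]
  have e3 : z - a ≠ 0 := by
    intro h
    apply e2
    rw [← sub_eq_zero.mp h, mul_inv_cancel₀ h0, sub_self]
  have e4 : (1 - a * z⁻¹) = (z - a) / z := by field_simp
  have e5 : 1 - z * a ≠ 0 := by rwa [mul_comm]
  rw [e4]
  field_simp
  ring

lemma FF_rec {q u a : ℂ} (hq0 : q ≠ 0) (hq : ‖q‖ < 1) (hu : u ^ 2 = q) (ha : ‖a‖ < 1) :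
    FF q a = FF q (a * q) := by
  have haq : ‖a * q‖ < 1 := by
    rw [norm_mul]; nlinarith [norm_nonneg a, norm_nonneg q]
  have hK := fun (b : ℂ) (hb : ‖b‖ < 1) => sec_cont (K := fun a z => qp q (z ^ 2) * qp q (z⁻¹ ^ 2) /
    (qp q (a * z) * qp q (a * z⁻¹))) le_rfl (FF_contOn hq hb)
  rw [← sub_eq_zero]
  unfold FF
  rw [← av_sub (hK a ha) (hK _ haq), ← mul_zero a, ← FF_key hq0 hq hu ha, ← av_const_mul]
  refine av_congr fun z hz => ?_
  have h0 := ne_of_norm hz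
  have n1 : qp q (a * z) ≠ 0 := qp_ne hq (by rw [norm_mul, hz]; simpa)
  have n2 : qp q (a * z⁻¹) ≠ 0 := qp_ne hq (by rw [norm_mul, norm_inv, hz]; simpa)
  have r1 := qp_rec hq (a * z)
  have r2 := qp_rec hq (a * z⁻¹)
  have e1 : 1 - a * z ≠ 0 := fun h => n1 (by rw [r1, h, zero_mul])
  have e2 : 1 - a * z⁻¹ ≠ 0 := fun h => n2 (by rw [r2, h, zero_mul])
  have m1 : qp q (a * z * q) ≠ 0 := fun h => n1 (by rw [r1, h, mul_zero])
  have m2 : qp q (a * z⁻¹ * q) ≠ 0 := fun h => n2 (by rw [r2, h, mul_zero])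
  rw [show a * q * z = a * z * q by ring, show a * q * z⁻¹ = a * z⁻¹ * q by ring, r1, r2]
  generalize qp q (a * z * q) = A at *
  generalize qp q (a * z⁻¹ * q) = B at *
  generalize qp q (z ^ 2) * qp q (z⁻¹ ^ 2) = C at *
  have e3 : z - a ≠ 0 := by
    intro h
    apply e2
    rw [← sub_eq_zero.mp h, mul_inv_cancel₀ h0, sub_self]
  have e4 : (1 - a * z⁻¹) = (z - a) / z := by field_simp
  have e5 : 1 - z * a ≠ 0 := by rwa [mul_comm]
  rw [e4]
  field_simp
  ring

lemma FF_eq {q u a : ℂ} (hq0 : q ≠ 0) (hq : ‖q‖ < 1) (hu : u ^ 2 = q) (ha : ‖a‖ < 1) :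
    FF q a = FF q 0 := by
  have h1 : ∀ n : ℕ, FF q (a * q ^ n) = FF q a := by
    intro n
    induction n with
    | zero => simp
    | succ n ih =>
      rw [← ih, FF_rec hq0 hq hu (a := a * q ^ n), pow_succ, mul_assoc]
      rw [norm_mul, norm_pow]
      calc ‖a‖ * ‖q‖ ^ n ≤ ‖a‖ * 1 := by gcongr; exact pow_le_one₀ (norm_nonneg _) hq.le
        _ < 1 := by simpa
  have h2 := av_lim (K := fun a z => qp q (z ^ 2) * qp q (z⁻¹ ^ 2) /
    (qp q (a * z) * qp q (a * z⁻¹))) hq le_rfl (FF_contOn hq ha)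
  exact tendsto_nhds_unique (tendsto_const_nhds.congr fun n => (h1 n).symm) h2

/-- half-range reduction -/
lemma half_range {g : ℂ → ℂ} (hg : ContinuousOn g (Metric.sphere 0 1))
    (hs : ∀ z, g z⁻¹ = g z) :
    2 * ∫ θ in (0:ℝ)..Real.pi, g (Complex.exp ((θ : ℂ) * Complex.I)) = av g := by
  have hi := fun a b => (cont_e hg).intervalIntegrable (μ := volume) a b
  unfold av
  rw [← intervalIntegral.integral_add_adjacent_intervals (hi 0 Real.pi) (hi Real.pi (2 * Real.pi)), two_mul]
  congr 1
  have h := intervalIntegral.integral_comp_sub_left (a := 0) (b := Real.pi)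
    (fun θ : ℝ => g (Complex.exp ((θ : ℂ) * Complex.I))) (2 * Real.pi)
  rw [show 2 * Real.pi - Real.pi = Real.pi by ring, sub_zero] at h
  rw [← h]
  congr 1
  ext θ
  rw [← hs]
  congr 1
  push_cast
  rw [sub_mul, Complex.exp_sub, Complex.exp_two_pi_mul_I, one_div]

lemma half_double (g : ℂ → ℂ) :
    2 * ∫ θ in (0:ℝ)..Real.pi, g (Complex.exp ((θ : ℂ) * Complex.I) ^ 2) = av g := by
  have h := intervalIntegral.smul_integral_comp_mul_left (a := 0) (b := Real.pi)
    (fun θ : ℝ => g (Complex.exp ((θ : ℂ) * Complex.I))) 2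
  unfold av
  rw [mul_zero] at h
  rw [← h, Complex.real_smul]
  push_cast
  congr 2
  ext θ
  rw [← Complex.exp_nat_mul]
  congr 2
  push_cast
  ring

lemma WW_val {q : ℂ} (hq0 : q ≠ 0) (hq : ‖q‖ < 1) :
    av (fun z => qp q z * qp q z⁻¹) = 2 * II q 0 := by
  have hJ := JJ (b := 0) hq0 hq (by simp)
  have hc := sec_cont (K := fun b z => TT q z / qp q (b * z⁻¹)) (b := 0) (r := 0) (by simp)
    (II_contOn hq one_pos)
  have hinv : ContinuousOn (fun z : ℂ => z⁻¹) (Metric.sphere 0 1) := by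
    refine continuousOn_inv₀.mono fun z hz => ?_
    exact ne_of_norm (by simpa using hz)
  have hc2 : ContinuousOn (fun z => z⁻¹ * (TT q z / qp q (0 * z⁻¹)))
      (Metric.sphere 0 1) := hinv.mul hc
  have hs := av_sub hc hc2
  rw [hJ, zero_mul] at hs
  change _ = II q 0 - _ at hs
  rw [sub_neg_eq_add, ← two_mul] at hs
  rw [← hs]
  refine av_congr fun z hz => ?_
  simp only [zero_mul, qp_zero, div_one, TT]
  rw [qp_rec hq z⁻¹, mul_comm z⁻¹ q]
  ring

theorem integral_step_four (q u a : ℂ) (hq0 : 0 < ‖q‖) (hq : ‖q‖ < 1) (hu : u ^ 2 = q)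
    (ha : ‖a‖ < 1) :
    ∫ θ in (0:ℝ)..Real.pi, (hh q θ 1 * hh q θ (-1) * hh q θ u * hh q θ (-u)) / hh q θ a
      = 2 * (Real.pi : ℂ) / qp q q := by
  have hq0' : q ≠ 0 := norm_pos_iff.mp hq0
  set G : ℂ → ℂ → ℂ := fun a z => qp q (z ^ 2) * qp q (z⁻¹ ^ 2) / (qp q (a * z) * qp q (a * z⁻¹))
    with hG
  have h1 : ∀ θ : ℝ, (hh q θ 1 * hh q θ (-1) * hh q θ u * hh q θ (-u)) / hh q θ a
      = G a (Complex.exp ((θ : ℂ) * Complex.I)) := by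
    intro θ
    simp only [hG, hh, Complex.exp_neg]
    rw [← qp_four hq hu, ← qp_four hq hu]
    ring
  simp only [h1]
  have hsym : ∀ a z, G a z⁻¹ = G a z := by
    intro a z
    simp only [hG, inv_inv]
    ring
  have hcG : ∀ b, ‖b‖ < 1 → ContinuousOn (G b) (Metric.sphere 0 1) := fun b hb =>
    sec_cont (K := G) le_rfl (FF_contOn hq hb)
  have e1 := half_range (hcG a ha) (hsym a)
  have e2 := half_range (hcG 0 (by simp)) (hsym 0)
  have e3 := half_double (fun z => qp q z * qp q z⁻¹)
  have e4 : av (G a) = av (G 0) := FF_eq hq0' hq hu ha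
  have e5 := WW_val hq0' hq
  have e6 := II_zero hq0' hq
  have e7 : ∀ z, G 0 z = qp q (z ^ 2) * qp q (z ^ 2)⁻¹ := by
    intro z
    simp [hG, qp_zero, inv_pow]
  simp only [e7] at e2
  have hne := qp_ne hq hq
  rw [eq_div_iff hne, ← e6]
  have e8 : av (G 0) = av (fun z => qp q (z ^ 2) * qp q (z ^ 2)⁻¹) := av_congr fun z _ => e7 z
  have e9 : (∫ θ in (0:ℝ)..Real.pi, G a (Complex.exp ((θ : ℂ) * Complex.I))) = II q 0 := by
    apply mul_left_cancel₀ (two_ne_zero (α := ℂ))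
    rw [e1, e4, ← e5, ← e3]
    exact e2.symm
  rw [e9, mul_comm]
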